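/- Fix 1 ≤ p < ∞ and δ > 0. Let m ≥ 1 and n ≥ 0 be integers. Suppose given real numbers b_i ≤ d_i and b'_i ≤ d'_i for i = 1,…,m (matched pairs of bars), and real numbers c_j ≤ e_j with e_j − c_j ≤ δ for j = 1,…,n (bars matched to the diagonal). Set η := max over i of max(|b_i − b'_i|, |d_i − d'_i|) and R := max over i of (d_i − b_i), and assume η ≤ 1. Let S_δ := {(x,y) ∈ ℝ² : y > x + δ}, and define the δ-truncated rank functions f := Σ_{i=1}^m 1_{T(b_i,d_i) ∩ S_δ} and g := Σ_{i=1}^m 1_{T(b'_i,d'_i) ∩ S_δ} + Σ_{j=1}^n 1_{T(c_j,e_j) ∩ S_δ}. Then (∫_{ℝ²} |f − g|^p dω)^{1/p} ≤ m · (2R + 2)^{1/p} · η^{1/p}. -/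

import Mathlib

open MeasureTheory

/-- The triangular region `T(b,d) = {(x,y) : b ≤ x ≤ y ≤ d}` in the plane. -/
def Tri (b d : ℝ) : Set (ℝ × ℝ) := {q | b ≤ q.1 ∧ q.1 ≤ q.2 ∧ q.2 ≤ d}

/-- The open region `S_δ = {(x,y) : y > x + δ}` above the diagonal. -/
def Sdelta (δ : ℝ) : Set (ℝ × ℝ) := {q | q.1 + δ < q.2}

/-!
Bars of persistence at most `δ` do not meet `S_δ`, so only the matched bars contribute to `f - g`,
and by Minkowski's inequality each pair contributes at most `vol (T(b,d) ∆ T(b',d')) ^ (1/p)`.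
This symmetric difference lies between the triangles `T(b,d) ∩ T(b',d')` and
`T(min b b', max d d')`, whose leg lengths differ by exactly `ε = |b - b'| + |d - d'|`; comparing
their areas bounds its area by `ε (d - b + ε / 2) ≤ (2 (d - b) + 2 η) η`, since `ε ≤ 2 η`.
-/

open scoped ENNReal symmDiff

section LpNorm

variable {α : Type*} [MeasurableSpace α] {μ : Measure α}

theorem eLpNorm_sum_indicator_sub_sum_indicator_le {ι : Type*} [Fintype ι] {p : ℝ≥0∞}
    (hp : 1 ≤ p) {A B : ι → Set α}
    (hA : ∀ i, MeasurableSet (A i)) (hB : ∀ i, MeasurableSet (B i)) :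
    eLpNorm (∑ i, (A i).indicator (fun _ => (1 : ℝ)) - ∑ i, (B i).indicator fun _ => (1 : ℝ)) p μ
      ≤ ∑ i, μ (A i ∆ B i) ^ (1 / p.toReal) := by
  have hmeas (i : ι) : AEStronglyMeasurable
      ((A i).indicator (fun _ => (1 : ℝ)) - (B i).indicator fun _ => (1 : ℝ)) μ :=
    (aestronglyMeasurable_const.indicator (hA i)).sub (aestronglyMeasurable_const.indicator (hB i))
  rw [← Finset.sum_sub_distrib]
  refine (eLpNorm_sum_le (fun i _ => hmeas i) hp).trans (Finset.sum_le_sum fun i _ => ?_)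
  rw [eLpNorm_indicator_sub_indicator]
  simpa using eLpNorm_indicator_const_le (s := A i ∆ B i) (c := (1 : ℝ)) (μ := μ) p

theorem lintegral_ofReal_abs_rpow_rpow_eq_eLpNorm {p : ℝ} (hp : 0 < p) (f : α → ℝ) :
    (∫⁻ x, ENNReal.ofReal (|f x| ^ p) ∂μ) ^ (1 / p) = eLpNorm f (ENNReal.ofReal p) μ := by
  simp [eLpNorm_eq_lintegral_rpow_enorm_toReal (ENNReal.ofReal_pos.mpr hp).ne'
    ENNReal.ofReal_ne_top, ENNReal.toReal_ofReal hp.le, Real.enorm_eq_ofReal_abs,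
    ENNReal.ofReal_rpow_of_nonneg (abs_nonneg _) hp.le]

end LpNorm

section Triangles

variable {b d b' d' δ : ℝ}

theorem measurableSet_tri (b d : ℝ) : MeasurableSet (Tri b d) :=
  (measurableSet_le measurable_const measurable_fst).inter
    ((measurableSet_le measurable_fst measurable_snd).inter
      (measurableSet_le measurable_snd measurable_const))

theorem measurableSet_sdelta (δ : ℝ) : MeasurableSet (Sdelta δ) :=
  measurableSet_lt (measurable_fst.add_const δ) measurable_snd

theorem tri_inter_tri (b d b' d' : ℝ) :
    Tri b d ∩ Tri b' d' = Tri (max b b') (min d d') := by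
  ext q
  simp only [Tri, Set.mem_inter_iff, Set.mem_ofPred_eq, max_le_iff, le_min_iff]
  tauto

theorem tri_subset_tri (hb : b' ≤ b) (hd : d ≤ d') : Tri b d ⊆ Tri b' d' :=
  fun _ hq => ⟨hb.trans hq.1, hq.2.1, hq.2.2.trans hd⟩

theorem tri_union_tri_subset (b d b' d' : ℝ) :
    Tri b d ∪ Tri b' d' ⊆ Tri (min b b') (max d d') :=
  Set.union_subset (tri_subset_tri (min_le_left _ _) (le_max_left _ _))
    (tri_subset_tri (min_le_right _ _) (le_max_right _ _))

theorem tri_inter_sdelta_eq_empty (h : d - b ≤ δ) : Tri b d ∩ Sdelta δ = ∅ := by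
  refine Set.eq_empty_of_forall_notMem ?_
  rintro q ⟨⟨hb, -, hd⟩, hδ : q.1 + δ < q.2⟩
  linarith

theorem volume_preimage_mk_tri (b d x : ℝ) :
    volume (Prod.mk x ⁻¹' Tri b d) =
      (Set.Icc b d).indicator (fun x => ENNReal.ofReal (d - x)) x := by
  by_cases hx : x ∈ Set.Icc b d
  · have hslice : Prod.mk x ⁻¹' Tri b d = Set.Icc x d := by
      ext y
      exact ⟨fun h => h.2, fun h => ⟨hx.1, h⟩⟩
    rw [Set.indicator_of_mem hx, hslice, Real.volume_Icc]
  · have hslice : Prod.mk x ⁻¹' Tri b d = ∅ :=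
      Set.eq_empty_of_forall_notMem fun y h => hx ⟨h.1, h.2.1.trans h.2.2⟩
    rw [Set.indicator_of_notMem hx, hslice, measure_empty]

theorem volume_tri (h : b ≤ d) : volume (Tri b d) = ENNReal.ofReal ((d - b) ^ 2 / 2) := by
  have hnonneg : 0 ≤ᵐ[volume.restrict (Set.Icc b d)] fun x => d - x := by
    filter_upwards [ae_restrict_mem measurableSet_Icc] with x hx
    exact sub_nonneg.mpr hx.2
  have hint : IntegrableOn (fun x => d - x) (Set.Icc b d) :=
    (by fun_prop : Continuous fun x : ℝ => d - x).integrableOn_Icc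
  calc volume (Tri b d)
      = ∫⁻ x in Set.Icc b d, ENNReal.ofReal (d - x) := by
        rw [Measure.volume_eq_prod, Measure.prod_apply (measurableSet_tri b d)]
        simp_rw [volume_preimage_mk_tri]
        exact lintegral_indicator measurableSet_Icc _
    _ = ENNReal.ofReal (∫ x in b..d, (d - x)) := by
        rw [← ofReal_integral_eq_lintegral_ofReal hint hnonneg, integral_Icc_eq_integral_Ioc,
          intervalIntegral.integral_of_le h]
    _ = ENNReal.ofReal ((d - b) ^ 2 / 2) := by
        simp [intervalIntegral.integral_comp_sub_left fun x : ℝ => x]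

theorem tri_symmDiff_tri_subset (b d b' d' : ℝ) :
    Tri b d ∆ Tri b' d' ⊆
      Tri (min b b') (max d d') \ Tri (max b b') (min d d') := by
  rw [symmDiff_eq_sup_sdiff_inf, ← tri_inter_tri]
  exact Set.sdiff_subset_sdiff_left (tri_union_tri_subset b d b' d')

theorem volume_tri_sdiff_tri (hb : b' ≤ b) (h : b ≤ d) (hd : d ≤ d') :
    volume (Tri b' d' \ Tri b d) =
      ENNReal.ofReal ((d' - b') ^ 2 / 2 - (d - b) ^ 2 / 2) := by
  have hfin : volume (Tri b d) ≠ ∞ := by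
    rw [volume_tri h]
    exact ENNReal.ofReal_ne_top
  rw [measure_sdiff (tri_subset_tri hb hd) (measurableSet_tri b d).nullMeasurableSet hfin,
    volume_tri h, volume_tri (hb.trans (h.trans hd)), ← ENNReal.ofReal_sub _ (by positivity)]

theorem volume_tri_symmDiff_tri_le (h : b ≤ d) :
    volume (Tri b d ∆ Tri b' d') ≤
      ENNReal.ofReal
        ((|b - b'| + |d - d'|) * (d - b + (|b - b'| + |d - d'|) / 2)) := by
  set ε := |b - b'| + |d - d'|
  set outer := max d d' - min b b'
  set inner := min d d' - max b b'
  have hε_nonneg : 0 ≤ ε := by positivity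
  have hdiff : outer - inner = ε := by
    linarith [max_sub_min_eq_abs' b b', max_sub_min_eq_abs' d d']
  have hinner_le : inner ≤ d - b := sub_le_sub (min_le_left _ _) (le_max_left _ _)
  have hle_outer : d - b ≤ outer := sub_le_sub (le_max_left _ _) (min_le_left _ _)
  have hsubset := tri_symmDiff_tri_subset b d b' d'
  rcases le_or_gt (max b b') (min d d') with hoverlap | hdisjoint
  · refine (measure_mono hsubset).trans_eq
      (volume_tri_sdiff_tri min_le_max hoverlap min_le_max) |>.trans ?_
    refine ENNReal.ofReal_le_ofReal ?_
    calc outer ^ 2 / 2 - inner ^ 2 / 2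
        = ε * (inner + ε / 2) := by rw [← hdiff]; ring
      _ ≤ ε * (d - b + ε / 2) := by gcongr
  · refine (measure_mono (hsubset.trans Set.sdiff_subset)).trans_eq
      (volume_tri (by linarith)) |>.trans ?_
    refine ENNReal.ofReal_le_ofReal ?_
    have houter_le : outer ≤ ε := by linarith
    calc outer ^ 2 / 2
        ≤ ε * (d - b + ε) / 2 := by
          rw [sq]
          gcongr
          all_goals linarith
      _ ≤ ε * (d - b + ε / 2) := by nlinarith

theorem volume_tri_symmDiff_tri_rpow_le {R η s : ℝ} (h : b ≤ d) (hR : d - b ≤ R)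
    (hη : max |b - b'| |d - d'| ≤ η) (hs : 0 ≤ s) :
    volume (Tri b d ∆ Tri b' d') ^ s ≤ ENNReal.ofReal ((2 * R + 2 * η) ^ s * η ^ s) := by
  obtain ⟨hb, hd⟩ := max_le_iff.mp hη
  have hη_nonneg : 0 ≤ η := (abs_nonneg _).trans hb
  have hR_nonneg : 0 ≤ R := (sub_nonneg.mpr h).trans hR
  have harea : (|b - b'| + |d - d'|) * (d - b + (|b - b'| + |d - d'|) / 2) ≤
      (2 * R + 2 * η) * η :=
    calc (|b - b'| + |d - d'|) * (d - b + (|b - b'| + |d - d'|) / 2)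
        ≤ (η + η) * (R + (η + η) / 2) := by gcongr
      _ = (2 * R + 2 * η) * η := by ring
  rw [← Real.mul_rpow (by positivity) hη_nonneg,
    ← ENNReal.ofReal_rpow_of_nonneg (by positivity) hs]
  exact ENNReal.rpow_le_rpow
    ((volume_tri_symmDiff_tri_le h).trans (ENNReal.ofReal_le_ofReal harea)) hs

end Triangles

/-- The rank function `∑ i, 1_{T(b i, d i)}` of the barcode with bars `[b i, d i)`, multiplied by
the indicator of `S_δ`. The multiplication is encoded by intersecting each triangle with `S_δ`. -/
noncomputable def truncatedRank {ι : Type*} [Fintype ι] (δ : ℝ) (b d : ι → ℝ) : ℝ × ℝ → ℝ :=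
  fun x => ∑ i, (Tri (b i) (d i) ∩ Sdelta δ).indicator (fun _ => (1 : ℝ)) x

section TruncatedRank

variable {ι κ : Type*} [Fintype ι] [Fintype κ] {p : ℝ≥0∞} {δ η R : ℝ}

theorem truncatedRank_eq_zero {c e : κ → ℝ} (h : ∀ j, e j - c j ≤ δ) :
    truncatedRank δ c e = 0 := by
  ext x
  simp [truncatedRank, tri_inter_sdelta_eq_empty (h _)]

theorem eLpNorm_truncatedRank_sub_truncatedRank_le (hp : 1 ≤ p) (b d b' d' : ι → ℝ) :
    eLpNorm (truncatedRank δ b d - truncatedRank δ b' d') p volume ≤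
      ∑ i, volume (Tri (b i) (d i) ∆ Tri (b' i) (d' i)) ^ (1 / p.toReal) := by
  have hmeas (b d : ℝ) : MeasurableSet (Tri b d ∩ Sdelta δ) :=
    (measurableSet_tri b d).inter (measurableSet_sdelta δ)
  have hsum (b d : ι → ℝ) : truncatedRank δ b d =
      ∑ i, (Tri (b i) (d i) ∩ Sdelta δ).indicator fun _ => (1 : ℝ) := by
    ext x
    simp only [truncatedRank, Finset.sum_apply]
  rw [hsum, hsum]
  refine (eLpNorm_sum_indicator_sub_sum_indicator_le hp
    (fun i => hmeas _ _) fun i => hmeas _ _).trans (Finset.sum_le_sum fun i _ => ?_)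
  rw [← Set.inter_symmDiff_distrib_right]
  gcongr
  exact Set.inter_subset_left

theorem stmt_6_general (hp : 1 ≤ p) {b d b' d' : ι → ℝ} {c e : κ → ℝ}
    (hbd : ∀ i, b i ≤ d i) (hdiag : ∀ j, e j - c j ≤ δ)
    (hη : ∀ i, max |b i - b' i| |d i - d' i| ≤ η) (hR : ∀ i, d i - b i ≤ R) :
    eLpNorm (truncatedRank δ b d - (truncatedRank δ b' d' + truncatedRank δ c e)) p volume ≤
      ENNReal.ofReal (Fintype.card ι * (2 * R + 2 * η) ^ (1 / p.toReal) * η ^ (1 / p.toReal)) := by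
  rw [truncatedRank_eq_zero hdiag, add_zero]
  calc eLpNorm (truncatedRank δ b d - truncatedRank δ b' d') p volume
      ≤ ∑ i, volume (Tri (b i) (d i) ∆ Tri (b' i) (d' i)) ^ (1 / p.toReal) :=
        eLpNorm_truncatedRank_sub_truncatedRank_le hp b d b' d'
    _ ≤ ∑ _i : ι, ENNReal.ofReal ((2 * R + 2 * η) ^ (1 / p.toReal) * η ^ (1 / p.toReal)) :=
        Finset.sum_le_sum fun i _ =>
          volume_tri_symmDiff_tri_rpow_le (hbd i) (hR i) (hη i) (by positivity)
    _ = _ := by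
        rw [Finset.sum_const, Finset.card_univ, ← ENNReal.ofReal_nsmul, nsmul_eq_mul, mul_assoc]

end TruncatedRank

/-- Bottleneck stability for δ-truncated rank functions: with `η ≤ 1` the
bottleneck matching cost and `R` the maximum persistence of the first barcode,
the `L^p` distance between the truncated rank functions is at most
`m · (2R + 2)^{1/p} · η^{1/p}`. -/
theorem stmt_6 (p δ : ℝ) (hp : 1 ≤ p) (hδ : 0 < δ)
    (m n : ℕ) (hm : 1 ≤ m)
    (b d b' d' : Fin m → ℝ) (c e : Fin n → ℝ)
    (hbd : ∀ i, b i ≤ d i) (hbd' : ∀ i, b' i ≤ d' i)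
    (hce : ∀ j, c j ≤ e j) (hdiag : ∀ j, e j - c j ≤ δ)
    (η R : ℝ)
    (hη : η = Finset.univ.sup' ⟨⟨0, hm⟩, Finset.mem_univ _⟩
      (fun i => max |b i - b' i| |d i - d' i|))
    (hR : R = Finset.univ.sup' ⟨⟨0, hm⟩, Finset.mem_univ _⟩ (fun i => d i - b i))
    (hη1 : η ≤ 1)
    (f g : ℝ × ℝ → ℝ)
    (hf : f = fun x => ∑ i, (Tri (b i) (d i) ∩ Sdelta δ).indicator (fun _ => (1 : ℝ)) x)
    (hg : g = fun x =>
      (∑ i, (Tri (b' i) (d' i) ∩ Sdelta δ).indicator (fun _ => (1 : ℝ)) x)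
        + ∑ j, (Tri (c j) (e j) ∩ Sdelta δ).indicator (fun _ => (1 : ℝ)) x) :
    (∫⁻ x, ENNReal.ofReal (|f x - g x| ^ p)) ^ (1 / p)
      ≤ ENNReal.ofReal ((m : ℝ) * (2 * R + 2) ^ (1 / p) * η ^ (1 / p)) := by
  have hη_le i : max |b i - b' i| |d i - d' i| ≤ η :=
    hη ▸ Finset.le_sup' (fun i => max |b i - b' i| |d i - d' i|) (Finset.mem_univ i)
  have hR_le i : d i - b i ≤ R := hR ▸ Finset.le_sup' (fun i => d i - b i) (Finset.mem_univ i)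
  have hη_nonneg : 0 ≤ η := (le_max_of_le_left (abs_nonneg _)).trans (hη_le ⟨0, hm⟩)
  have hR_nonneg : 0 ≤ R := (sub_nonneg.mpr (hbd ⟨0, hm⟩)).trans (hR_le ⟨0, hm⟩)
  have hp_pos : 0 < p := zero_lt_one.trans_le hp
  have hbound := stmt_6_general (δ := δ) (ENNReal.one_le_ofReal.mpr hp) hbd hdiag hη_le hR_le
  rw [ENNReal.toReal_ofReal hp_pos.le, Fintype.card_fin] at hbound
  rw [lintegral_ofReal_abs_rpow_rpow_eq_eLpNorm hp_pos (fun x => f x - g x), hf, hg]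
  refine hbound.trans (ENNReal.ofReal_le_ofReal ?_)
  gcongr
  linarith
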